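/- For every fixed (β, μ) ∈ ℝ^d × ℝ^N, the infimum over s ∈ ℝ^m of L(β, μ, s) is attained and equals L_δ(β, μ); consequently, inf over (β, μ, s) ∈ ℝ^d × ℝ^N × ℝ^m of L(β, μ, s) equals inf over (β, μ) ∈ ℝ^d × ℝ^N of L_δ(β, μ). -/

import Mathlib

/-!
The criterion `L(β, μ, s)` is separable in `s`: up to terms not involving `s`, it is the sum over
`k` of `(r_k - s_k)² + 2δ|s_k|`, with `r_k` the residual of `(β, μ)`. Each summand is at least
`H_δ(r_k)` (`huber_le`), with equality when `s_k` is the soft thresholding of `r_k` at level `δ`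
(`exists_huber_eq`). Hence `L_δ(β, μ)` is the minimum of `L(β, μ, ·)`. The two global infima then
agree by comparing values in both directions, all of which are bounded below by `0`.
-/

/-- The Huber loss with parameter `δ`. -/
noncomputable def huber (δ a : ℝ) : ℝ :=
  if |a| ≤ δ then a ^ 2 else δ * (2 * |a| - δ)

/-- The joint robust MAP criterion `L(β, μ, s)`. -/
noncomputable def Ljoint (m d N : ℕ) (g : Fin m → Fin N) (y : Fin m → ℝ)
    (x : Fin m → Fin d → ℝ) (lam α δ : ℝ)
    (β : Fin d → ℝ) (μ : Fin N → ℝ) (s : Fin m → ℝ) : ℝ :=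
  (∑ k, (y k - (∑ i, x k i * β i) - μ (g k) - s k) ^ 2) +
    lam * ∑ i, (μ i) ^ 2 + α * ∑ i, (β i) ^ 2 + 2 * δ * ∑ k, |s k|

/-- The Huber MAP criterion `L_δ(β, μ)`. -/
noncomputable def Lhuber (m d N : ℕ) (g : Fin m → Fin N) (y : Fin m → ℝ)
    (x : Fin m → Fin d → ℝ) (lam α δ : ℝ)
    (β : Fin d → ℝ) (μ : Fin N → ℝ) : ℝ :=
  (∑ k, huber δ (y k - (∑ i, x k i * β i) - μ (g k))) +
    lam * ∑ i, (μ i) ^ 2 + α * ∑ i, (β i) ^ 2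

theorem huber_nonneg {δ : ℝ} (hδ : 0 < δ) (a : ℝ) : 0 ≤ huber δ a := by
  unfold huber
  split_ifs with h
  · positivity
  · exact mul_nonneg hδ.le (by linarith)

theorem huber_le {δ : ℝ} (hδ : 0 < δ) (a s : ℝ) :
    huber δ a ≤ (a - s) ^ 2 + 2 * δ * |s| := by
  unfold huber
  split_ifs with h
  · -- Expanding the square, the claim reduces to `a * s ≤ |a| * |s| ≤ δ * |s|`.
    have h1 : a * s ≤ |a| * |s| := (le_abs_self _).trans (abs_mul a s).le
    have h2 : |a| * |s| ≤ δ * |s| := mul_le_mul_of_nonneg_right h (abs_nonneg s)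
    nlinarith [sq_nonneg s]
  · -- With `|a| ≤ |a - s| + |s|`, the gap is at least `(|a - s| - δ)²`.
    have h1 : |a| ≤ |a - s| + |s| := by simpa using abs_add_le (a - s) s
    have h2 : δ * |a| ≤ δ * (|a - s| + |s|) := mul_le_mul_of_nonneg_left h1 hδ.le
    nlinarith [sq_nonneg (|a - s| - δ), sq_abs (a - s)]

/-- The witness is the soft thresholding of `a` at level `δ`. -/
theorem exists_huber_eq (δ a : ℝ) :
    ∃ s : ℝ, (a - s) ^ 2 + 2 * δ * |s| = huber δ a := by
  unfold huber
  split_ifs with h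
  · exact ⟨0, by simp⟩
  · rcases le_total 0 a with ha | ha
    · rw [abs_of_nonneg ha] at h ⊢
      refine ⟨a - δ, ?_⟩
      rw [abs_of_nonneg (by linarith)]
      ring
    · rw [abs_of_nonpos ha] at h ⊢
      refine ⟨a + δ, ?_⟩
      rw [abs_of_nonpos (by linarith)]
      ring

theorem Ljoint_eq (m d N : ℕ) (g : Fin m → Fin N) (y : Fin m → ℝ)
    (x : Fin m → Fin d → ℝ) (lam α δ : ℝ)
    (β : Fin d → ℝ) (μ : Fin N → ℝ) (s : Fin m → ℝ) :
    Ljoint m d N g y x lam α δ β μ s =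
      (∑ k, ((y k - (∑ i, x k i * β i) - μ (g k) - s k) ^ 2 + 2 * δ * |s k|)) +
        lam * ∑ i, (μ i) ^ 2 + α * ∑ i, (β i) ^ 2 := by
  unfold Ljoint
  rw [Finset.sum_add_distrib, ← Finset.mul_sum]
  ring

/-- Theorem 2: for every fixed `(β, μ)`, the infimum over `s` of `L(β, μ, s)` is
attained and equals `L_δ(β, μ)`; consequently the infima of the two criteria
coincide. -/
theorem joint_inf_eq_huber (m d N : ℕ) (g : Fin m → Fin N) (y : Fin m → ℝ)
    (x : Fin m → Fin d → ℝ) (lam α δ : ℝ) (hlam : 0 < lam) (hα : 0 < α) (hδ : 0 < δ) :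
    (∀ (β : Fin d → ℝ) (μ : Fin N → ℝ),
        IsLeast (Set.range fun s : Fin m → ℝ => Ljoint m d N g y x lam α δ β μ s)
          (Lhuber m d N g y x lam α δ β μ)) ∧
    (⨅ p : (Fin d → ℝ) × (Fin N → ℝ) × (Fin m → ℝ),
        Ljoint m d N g y x lam α δ p.1 p.2.1 p.2.2) =
      ⨅ q : (Fin d → ℝ) × (Fin N → ℝ), Lhuber m d N g y x lam α δ q.1 q.2 := by
  have least : ∀ (β : Fin d → ℝ) (μ : Fin N → ℝ),
      IsLeast (Set.range fun s : Fin m → ℝ => Ljoint m d N g y x lam α δ β μ s)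
        (Lhuber m d N g y x lam α δ β μ) := by
    intro β μ
    constructor
    · choose s hs using fun k => exists_huber_eq δ (y k - (∑ i, x k i * β i) - μ (g k))
      refine ⟨s, ?_⟩
      simp only [Ljoint_eq, Lhuber, hs]
    · rintro _ ⟨s, rfl⟩
      simp only [Ljoint_eq, Lhuber]
      gcongr with k
      exact huber_le hδ _ _
  have nonneg : ∀ (β : Fin d → ℝ) (μ : Fin N → ℝ), 0 ≤ Lhuber m d N g y x lam α δ β μ := by
    intro β μ
    have h : 0 ≤ ∑ k, huber δ (y k - (∑ i, x k i * β i) - μ (g k)) :=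
      Finset.sum_nonneg fun k _ => huber_nonneg hδ _
    unfold Lhuber
    positivity
  have le_joint : ∀ (β : Fin d → ℝ) (μ : Fin N → ℝ) (s : Fin m → ℝ),
      Lhuber m d N g y x lam α δ β μ ≤ Ljoint m d N g y x lam α δ β μ s :=
    fun β μ s => (least β μ).2 ⟨s, rfl⟩
  refine ⟨least, le_antisymm ?_ ?_⟩
  · refine le_ciInf fun q => ?_
    obtain ⟨s, hs⟩ := (least q.1 q.2).1
    rw [← hs]
    refine ciInf_le (f := fun p : (Fin d → ℝ) × (Fin N → ℝ) × (Fin m → ℝ) =>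
      Ljoint m d N g y x lam α δ p.1 p.2.1 p.2.2) ⟨0, ?_⟩ (q.1, q.2, s)
    rintro _ ⟨p, rfl⟩
    exact (nonneg _ _).trans (le_joint _ _ _)
  · refine le_ciInf fun p => ?_
    refine (ciInf_le (f := fun q : (Fin d → ℝ) × (Fin N → ℝ) =>
      Lhuber m d N g y x lam α δ q.1 q.2) ⟨0, ?_⟩ (p.1, p.2.1)).trans (le_joint _ _ _)
    rintro _ ⟨q, rfl⟩
    exact nonneg _ _
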